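/- arXiv:2512.00270 — 3 statements merged into one kernel-verified Lean document; each statement's English description precedes it below -/
import Mathlib

section
/- Let F : S → G(S) be a Markov chain on a measurable space S and let p : S → {1,…,d} be a measurable priority function. If there exists a lexicographic progress-measure supermartingale for (F, p), then ℙ_{x₀}[Parity(p)] = 1 for every initial state x₀ ∈ S. -/
open MeasureTheory ProbabilityTheory Set
open scoped ENNReal NNReal

variable {S : Type*} [MeasurableSpace S]

/-- Prepend an initial state to a trace. -/
def prep (s₀ : S) (ω : ℕ → S) : ℕ → S := fun n => Nat.rec s₀ (fun k _ => ω k) n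

/-- The parity condition for a priority function `p`: the minimum priority
occurring infinitely often is even. -/
def parityEvent (p : S → ℕ) : Set (ℕ → S) :=
  {ω | Even (sInf {q : ℕ | {i : ℕ | p (ω i) = q}.Infinite})}

/-- The strict lexicographic supermartingale ordering on `[0,∞]^n`. -/
def lexGT {n : ℕ} (a b : Fin n → ℝ≥0∞) : Prop :=
  ∃ l : Fin n, (∀ i < l, b i ≤ a i) ∧ b l + 1 ≤ a l

/-- The non-strict lexicographic supermartingale ordering on `[0,∞]^n`. -/
def lexGE {n : ℕ} (a b : Fin n → ℝ≥0∞) : Prop :=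
  lexGT a b ∨ ∀ i, b i ≤ a i

/-- The truncated nested strict lexicographic ordering `≻⁽²⁾_k`, comparing only
the first `k` blocks. -/
def nlexGTTrunc {d : ℕ} {m : Fin d → ℕ} (k : ℕ) (a b : ∀ i, Fin (m i) → ℝ≥0∞) : Prop :=
  ∃ l : Fin d, (l : ℕ) < k ∧ (∀ i < l, lexGE (a i) (b i)) ∧ lexGT (a l) (b l)

/-- The truncated nested non-strict lexicographic ordering `⪰⁽²⁾_k`, comparing only
the first `k` blocks. -/
def nlexGETrunc {d : ℕ} {m : Fin d → ℕ} (k : ℕ) (a b : ∀ i, Fin (m i) → ℝ≥0∞) : Prop :=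
  nlexGTTrunc k a b ∨ ∀ i : Fin d, (i : ℕ) < k → lexGE (a i) (b i)

/-- The next-time operator applied componentwise to a nested-vector-valued
function: `(𝕏 r)(s) = ∫ r dF(s)`. -/
noncomputable def nextTimeN (F : Kernel S S) {d : ℕ} {m : Fin d → ℕ}
    (r : S → ∀ i, Fin (m i) → ℝ≥0∞) : S → ∀ i, Fin (m i) → ℝ≥0∞ :=
  fun s i k => ∫⁻ y, r y i k ∂(F s)

/-- A lexicographic progress-measure supermartingale (LexPMSM) for `(F, p)` with
block sizes `m₁,…,m_d`: a measurable function `r : S → ∏ᵢ [0,∞)^{mᵢ}` with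
`r(x) ⪰⁽²⁾_{p(x)} (𝕏 r)(x)` when `p(x)` is even and `r(x) ≻⁽²⁾_{p(x)} (𝕏 r)(x)`
when `p(x)` is odd. -/
def IsLexPMSM (F : Kernel S S) (p : S → ℕ) {d : ℕ} {m : Fin d → ℕ}
    (r : S → ∀ i, Fin (m i) → ℝ≥0∞) : Prop :=
  (∀ i k, Measurable fun x => r x i k) ∧ (∀ x i k, r x i k ≠ ⊤) ∧
    (∀ x, Even (p x) → nlexGETrunc (p x) (r x) (nextTimeN F r x)) ∧
    (∀ x, ¬ Even (p x) → nlexGTTrunc (p x) (r x) (nextTimeN F r x))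

theorem aux_prep_meas : Measurable fun z : S × (ℕ → S) => prep z.1 z.2 := by
  refine measurable_pi_iff.2 fun n => ?_
  cases n with
  | zero => exact measurable_fst
  | succ n => exact (measurable_pi_apply n).comp measurable_snd

theorem aux_bind (F : Kernel S S) (P : Kernel S (ℕ → S)) [IsMarkovKernel P]
    (hP : ∀ s₀ : S, (P s₀ : Measure (ℕ → S)) = (F s₀).bind fun s₁ => (P s₁).map (prep s₁))
    (x : S) {E : Set (ℕ → S)} (hE : MeasurableSet E) :
    P x E = ∫⁻ y, P y (prep y ⁻¹' E) ∂(F x) := by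
  have hy : ∀ y : S, Measurable (prep y) := fun y =>
    aux_prep_meas.comp measurable_prodMk_left
  have hm : Measurable fun s₁ => (P s₁).map (prep s₁) := by
    refine Measure.measurable_of_measurable_coe _ fun s hs => ?_
    simp_rw [fun b => Measure.map_apply (μ := P b) (hy b) hs]
    exact Kernel.measurable_kernel_prodMk_left (κ := P) (aux_prep_meas hs)
  rw [hP x, Measure.bind_apply hE hm.aemeasurable]
  refine lintegral_congr fun y => ?_
  rw [Measure.map_apply (hy y) hE]

/-- stays outside `B` up to time `n` and is in `D` at time `n`. -/
def auxE (B D : Set S) (n : ℕ) : Set (ℕ → S) := {ω | (∀ i ≤ n, ω i ∉ B) ∧ ω n ∈ D}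

theorem auxE_meas {B D : Set S} (hB : MeasurableSet B) (hD : MeasurableSet D) (n : ℕ) :
    MeasurableSet (auxE B D n) := by
  have : auxE B D n = (⋂ i, ⋂ (_ : i ≤ n), (fun ω : ℕ → S => ω i) ⁻¹' Bᶜ) ∩
      (fun ω : ℕ → S => ω n) ⁻¹' D := by
    ext ω; simp [auxE]
  rw [this]
  exact (MeasurableSet.iInter fun i => MeasurableSet.iInter fun _ =>
    measurable_pi_apply i hB.compl).inter (measurable_pi_apply n hD)

theorem auxE_zero (B D : Set S) (x : S) (ω : ℕ → S) :
    prep x ω ∈ auxE B D 0 ↔ x ∉ B ∧ x ∈ D := by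
  simp [auxE, prep]

theorem auxE_succ (B D : Set S) (n : ℕ) (x : S) (ω : ℕ → S) :
    prep x ω ∈ auxE B D (n + 1) ↔ x ∉ B ∧ ω ∈ auxE B D n := by
  constructor
  · rintro ⟨h1, h2⟩
    exact ⟨h1 0 (Nat.zero_le _), fun i hi => h1 (i + 1) (by omega), h2⟩
  · rintro ⟨h0, h1, h2⟩
    refine ⟨fun i hi => ?_, h2⟩
    cases i with
    | zero => exact h0
    | succ i => exact h1 i (by omega)

theorem aux_sum (F : Kernel S S) (P : Kernel S (ℕ → S)) [IsMarkovKernel P]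
    (hP : ∀ s₀ : S, (P s₀ : Measure (ℕ → S)) = (F s₀).bind fun s₁ => (P s₁).map (prep s₁))
    {B D : Set S} (hB : MeasurableSet B) (hD : MeasurableSet D) (f : S → ℝ≥0∞)
    (h1 : ∀ x, x ∉ B → ∫⁻ y, f y ∂(F x) ≤ f x)
    (h2 : ∀ x, x ∉ B → x ∈ D → ∫⁻ y, f y ∂(F x) + 1 ≤ f x) (n : ℕ) :
    ∀ x, ∑ i ∈ Finset.range n, P x (prep x ⁻¹' auxE B D i) ≤ f x := by
  induction n with
  | zero => simp
  | succ n ih =>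
    intro x
    rw [Finset.sum_range_succ']
    by_cases hx : x ∈ B
    · have e0 : prep x ⁻¹' auxE B D 0 = ∅ := by
        ext ω; simp [auxE_zero, hx]
      have e1 : ∀ i, prep x ⁻¹' auxE B D (i + 1) = ∅ := by
        intro i; ext ω; simp [auxE_succ, hx]
      simp [e0, e1]
    · have e1 : ∀ i, prep x ⁻¹' auxE B D (i + 1) = auxE B D i := by
        intro i; ext ω; simp [auxE_succ, hx]
      have hs : ∑ i ∈ Finset.range n, P x (prep x ⁻¹' auxE B D (i + 1))
          ≤ ∫⁻ y, f y ∂(F x) := by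
        simp_rw [e1, fun i => aux_bind F P hP x (auxE_meas hB hD i)]
        rw [← lintegral_finsetSum]
        · exact lintegral_mono fun y => ih y
        · intro i _
          exact Kernel.measurable_kernel_prodMk_left (κ := P)
            (aux_prep_meas (auxE_meas hB hD i))
      by_cases hxD : x ∈ D
      · exact (add_le_add hs prob_le_one).trans (h2 x hx hxD)
      · have e0 : prep x ⁻¹' auxE B D 0 = ∅ := by
          ext ω; simp [auxE_zero, hxD]
        simpa [e0] using hs.trans (h1 x hx)

theorem aux_shift (F : Kernel S S) (P : Kernel S (ℕ → S)) [IsMarkovKernel P]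
    (hP : ∀ s₀ : S, (P s₀ : Measure (ℕ → S)) = (F s₀).bind fun s₁ => (P s₁).map (prep s₁))
    {Q : Set (ℕ → S)} (hQ : MeasurableSet Q) (h : ∀ x, P x Q = 0) (n : ℕ) :
    ∀ x, P x ((fun ω i => ω (i + n)) ⁻¹' Q) = 0 := by
  induction n with
  | zero => simpa using h
  | succ n ih =>
    intro x
    have hm : ∀ n : ℕ, Measurable (fun (ω : ℕ → S) i => ω (i + n)) := fun n =>
      measurable_pi_iff.2 fun i => measurable_pi_apply (i + n)
    rw [aux_bind F P hP x (hm _ hQ)]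
    have : ∀ y : S, P y (prep y ⁻¹' ((fun ω i => ω (i + (n + 1))) ⁻¹' Q)) = 0 := fun y => ih y
    simp [this]

theorem aux_main (F : Kernel S S) (P : Kernel S (ℕ → S)) [IsMarkovKernel P]
    (hP : ∀ s₀ : S, (P s₀ : Measure (ℕ → S)) = (F s₀).bind fun s₁ => (P s₁).map (prep s₁))
    {B D : Set S} (hB : MeasurableSet B) (hD : MeasurableSet D) (f : S → ℝ≥0∞)
    (hf : ∀ x, f x ≠ ⊤)
    (h1 : ∀ x, x ∉ B → ∫⁻ y, f y ∂(F x) ≤ f x)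
    (h2 : ∀ x, x ∉ B → x ∈ D → ∫⁻ y, f y ∂(F x) + 1 ≤ f x) (x : S) :
    ∀ᵐ ω ∂(P x), (∀ᶠ n in Filter.atTop, ω n ∉ B) → ∀ᶠ n in Filter.atTop, ω n ∉ D := by
  set Q : Set (ℕ → S) := Filter.limsup (auxE B D) Filter.atTop with hQdef
  have hQ : MeasurableSet Q := MeasurableSet.measurableSet_limsup (auxE_meas hB hD)
  have hQ0 : ∀ x, P x Q = 0 := by
    intro x
    rw [aux_bind F P hP x hQ]
    have : ∀ y : S, P y (prep y ⁻¹' Q) = 0 := by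
      intro y
      have hs : ∑' i, P y (prep y ⁻¹' auxE B D i) ≠ ⊤ := by
        refine ne_top_of_le_ne_top (hf y) ?_
        rw [ENNReal.tsum_eq_iSup_nat]
        exact iSup_le fun n => aux_sum F P hP hB hD f h1 h2 n y
      have := measure_limsup_atTop_eq_zero hs
      convert this using 2
      ext ω
      simp [hQdef, Filter.mem_limsup_iff_frequently_mem]
    simp [this]
  have hall : ∀ᵐ ω ∂(P x), ∀ n : ℕ, (fun i => ω (i + n)) ∉ Q := by
    rw [ae_all_iff]
    intro n
    rw [ae_iff]
    have := aux_shift F P hP hQ hQ0 n x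
    simpa [Set.preimage] using this
  filter_upwards [hall] with ω hω hev
  obtain ⟨N, hN⟩ := Filter.eventually_atTop.1 hev
  have := hω N
  rw [hQdef, Filter.mem_limsup_iff_frequently_mem, Filter.not_frequently] at this
  obtain ⟨M, hM⟩ := Filter.eventually_atTop.1 this
  refine Filter.eventually_atTop.2 ⟨M + N, fun n hn hnD => hM (n - N) (by omega) ⟨?_, ?_⟩⟩
  · intro i _
    exact hN _ (by omega)
  · have : n - N + N = n := by omega
    simpa [this] using hnD

/-- The states where component `(i,k)` decreases by one. -/
def auxA (F : Kernel S S) {d : ℕ} {m : Fin d → ℕ} (r : S → ∀ i, Fin (m i) → ℝ≥0∞)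
    (i : Fin d) (k : Fin (m i)) : Set S := {x | ∫⁻ y, r y i k ∂(F x) + 1 ≤ r x i k}

theorem aux_lexGE {n : ℕ} {a b : Fin n → ℝ≥0∞} (h : lexGE a b) (k : Fin n)
    (hk : ∀ c < k, ¬ b c + 1 ≤ a c) : b k ≤ a k := by
  rcases h with ⟨l, h1, h2⟩ | h
  · rcases lt_trichotomy l k with h | h | h
    · exact absurd h2 (hk l h)
    · subst h; exact le_self_add.trans h2
    · exact h1 k h
  · exact h k

theorem aux_local {d : ℕ} {m : Fin d → ℕ} {a b : ∀ i, Fin (m i) → ℝ≥0∞} {n : ℕ}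
    (h : nlexGETrunc n a b) (i : Fin d) (hi : (i : ℕ) < n) (k : Fin (m i))
    (h1 : ∀ j < i, ∀ c, ¬ b j c + 1 ≤ a j c) (h2 : ∀ c < k, ¬ b i c + 1 ≤ a i c) :
    b i k ≤ a i k := by
  rcases h with ⟨l, _, hl, hgt⟩ | h
  · rcases lt_trichotomy l i with h | h | h
    · obtain ⟨c, _, hc⟩ := hgt
      exact absurd hc (h1 l h c)
    · subst h; exact aux_lexGE (Or.inl hgt) k h2
    · exact aux_lexGE (hl i h) k h2
  · exact aux_lexGE (h i hi) k h2

theorem aux_comp (F : Kernel S S) [IsMarkovKernel F]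
    (P : Kernel S (ℕ → S)) [IsMarkovKernel P]
    (hP : ∀ s₀ : S, (P s₀ : Measure (ℕ → S)) = (F s₀).bind fun s₁ => (P s₁).map (prep s₁))
    {d : ℕ} {p : S → ℕ} (hpm : Measurable p) {m : Fin d → ℕ}
    {r : S → ∀ i, Fin (m i) → ℝ≥0∞} (hr : IsLexPMSM F p r) (q : ℕ) (x₀ : S)
    (i : Fin d) : (i : ℕ) < q → ∀ k : Fin (m i), ∀ᵐ ω ∂(P x₀),
      (∀ᶠ n in Filter.atTop, q ≤ p (ω n)) → ∀ᶠ n in Filter.atTop, ω n ∉ auxA F r i k := by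
  obtain ⟨hrm, hrf, hre, hro⟩ := hr
  have hge : ∀ x, nlexGETrunc (p x) (r x) (nextTimeN F r x) := fun x => by
    by_cases h : Even (p x)
    · exact hre x h
    · exact Or.inl (hro x h)
  have hA : ∀ i k, MeasurableSet (auxA F r i k) := fun i k =>
    measurableSet_le (((hrm i k).lintegral_kernel).add_const 1) (hrm i k)
  induction i using WellFoundedLT.induction with
  | ind i ihi =>
  intro hiq k
  induction k using WellFoundedLT.induction with
  | ind k ihk =>
  let B : Set S := {x | p x < q} ∪ ((⋃ j, ⋃ (_ : j < i), ⋃ c, auxA F r j c) ∪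
    ⋃ c, ⋃ (_ : c < k), auxA F r i c)
  have hB : MeasurableSet B := by
    refine (hpm measurableSet_Iio).union (MeasurableSet.union ?_ ?_)
    · exact MeasurableSet.iUnion fun j => MeasurableSet.iUnion fun _ =>
        MeasurableSet.iUnion fun c => hA j c
    · exact MeasurableSet.iUnion fun c => MeasurableSet.iUnion fun _ => hA i c
  have hBn : ∀ x, x ∉ B ↔ q ≤ p x ∧ (∀ j < i, ∀ c, x ∉ auxA F r j c) ∧
      ∀ c < k, x ∉ auxA F r i c := by
    intro x; simp [B]
  have key := aux_main F P hP hB (hA i k) (fun x => r x i k) (fun x => hrf x i k)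
    (fun x hx => by
      obtain ⟨a1, a2, a3⟩ := (hBn x).1 hx
      exact aux_local (hge x) i (hiq.trans_le a1) k a2 a3)
    (fun x _ h => h) x₀
  have e1 : ∀ᵐ ω ∂(P x₀), ∀ j, ∀ (_ : j < i), ∀ c, (∀ᶠ n in Filter.atTop, q ≤ p (ω n)) →
      ∀ᶠ n in Filter.atTop, ω n ∉ auxA F r j c := by
    refine ae_all_iff.2 fun j => ae_all_iff.2 fun hj => ae_all_iff.2 fun c => ?_
    exact ihi j hj (lt_trans (by exact_mod_cast hj) hiq) c
  have e2 : ∀ᵐ ω ∂(P x₀), ∀ c, ∀ (_ : c < k), (∀ᶠ n in Filter.atTop, q ≤ p (ω n)) →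
      ∀ᶠ n in Filter.atTop, ω n ∉ auxA F r i c := by
    refine ae_all_iff.2 fun c => ae_all_iff.2 fun hc => ?_
    exact ihk c hc
  filter_upwards [key, e1, e2] with ω hk h1 h2 hq
  refine hk ?_
  have f1 : ∀ᶠ n in Filter.atTop, ∀ j, ∀ (_ : j < i), ∀ c, ω n ∉ auxA F r j c := by
    refine Filter.eventually_all.2 fun j => Filter.eventually_all.2 fun hj =>
      Filter.eventually_all.2 fun c => h1 j hj c hq
  have f2 : ∀ᶠ n in Filter.atTop, ∀ c, ∀ (_ : c < k), ω n ∉ auxA F r i c :=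
    Filter.eventually_all.2 fun c => Filter.eventually_all.2 fun hc => h2 c hc hq
  filter_upwards [hq, f1, f2] with n a1 a2 a3
  exact (hBn _).2 ⟨a1, a2, a3⟩

/-- If a lexicographic progress-measure supermartingale exists for `(F, p)`, then
the parity condition for `p` holds almost surely from every initial state. -/
theorem LexPMSM_implies_parity_as
    (F : Kernel S S) [IsMarkovKernel F]
    (P : Kernel S (ℕ → S)) [IsMarkovKernel P]
    (hP : ∀ s₀ : S, (P s₀ : Measure (ℕ → S)) = (F s₀).bind fun s₁ => (P s₁).map (prep s₁))
    (d : ℕ) (p : S → ℕ) (hpm : Measurable p) (hp : ∀ x, 1 ≤ p x ∧ p x ≤ d)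
    (hLexPMSM : ∃ (m : Fin d → ℕ) (_ : ∀ i, 0 < m i) (r : S → ∀ i, Fin (m i) → ℝ≥0∞),
      IsLexPMSM F p r) :
    ∀ x₀ : S, P x₀ (parityEvent p) = 1 := by
  intro x₀
  obtain ⟨m, _, r, hr⟩ := hLexPMSM
  have hall : ∀ᵐ ω ∂(P x₀), ∀ q : ℕ, ∀ i : Fin d, ∀ (_ : (i : ℕ) < q), ∀ k : Fin (m i),
      (∀ᶠ n in Filter.atTop, q ≤ p (ω n)) → ∀ᶠ n in Filter.atTop, ω n ∉ auxA F r i k :=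
    ae_all_iff.2 fun q => ae_all_iff.2 fun i => ae_all_iff.2 fun hi => ae_all_iff.2 fun k =>
      aux_comp F P hP hpm hr q x₀ i hi k
  have hpar : ∀ᵐ ω ∂(P x₀), ω ∈ parityEvent p := by
    filter_upwards [hall] with ω hω
    show Even (sInf {q : ℕ | {i : ℕ | p (ω i) = q}.Infinite})
    set T := {q : ℕ | {i : ℕ | p (ω i) = q}.Infinite} with hT
    have hne : T.Nonempty := by
      by_contra hcon
      have hfin : ∀ q, {i : ℕ | p (ω i) = q}.Finite := fun q => by
        by_contra h
        exact hcon ⟨q, h⟩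
      have : (⋃ q ∈ Set.Iic d, {i : ℕ | p (ω i) = q}).Finite :=
        (Set.finite_Iic d).biUnion fun q _ => hfin q
      refine Set.infinite_univ (this.subset fun i _ => ?_)
      simp [(hp (ω i)).2]
    have hmem : {i : ℕ | p (ω i) = sInf T}.Infinite := Nat.sInf_mem hne
    have hlow : ∀ q < sInf T, {i : ℕ | p (ω i) = q}.Finite := fun q hq => by
      by_contra h
      exact Nat.notMem_of_lt_sInf hq h
    generalize sInf T = q at hmem hlow
    by_contra hodd
    have hev : ∀ᶠ n in Filter.atTop, q ≤ p (ω n) := by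
      have : (⋃ q' ∈ Set.Iio q, {i : ℕ | p (ω i) = q'}).Finite :=
        (Set.finite_Iio q).biUnion fun q' h => hlow q' h
      rw [← Nat.cofinite_eq_atTop, Filter.eventually_cofinite]
      refine this.subset fun i hi => ?_
      simpa using hi
    have hA : ∀ᶠ n in Filter.atTop, ∀ i : Fin d, ∀ (_ : (i : ℕ) < q), ∀ k : Fin (m i),
        ω n ∉ auxA F r i k :=
      Filter.eventually_all.2 fun i => Filter.eventually_all.2 fun hi =>
        Filter.eventually_all.2 fun k => hω q i hi k hev
    obtain ⟨n, hn, hnA⟩ := ((Nat.frequently_atTop_iff_infinite.2 hmem).and_eventually hA).exists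
    have hn : p (ω n) = q := hn
    obtain ⟨l, hl, _, c, _, hc⟩ := hr.2.2.2 (ω n) (by rwa [hn])
    exact hnA l (by omega) c hc
  have he : parityEvent p =ᵐ[P x₀] Set.univ := Filter.eventuallyEq_univ.2 hpar
  rw [measure_congr he]
  exact measure_univ
end

section
/- Let F : S → G(S) be a Markov chain on a measurable space S, let p : S → {1,…,d} be a measurable priority function, and let r : S → ∏_{i=1}^{d} [0,∞)^{m_i} be a lexicographic progress-measure supermartingale for (F, p) with components r₁,…,r_d. Define r' : S → ∏_{j=1}^{⌈d/2⌉} [0,∞)^{m'_j} by r'₁ = r₁ and r'_j = flat(r_{2j−2}, r_{2j−1}) for 2 ≤ j ≤ ⌈d/2⌉ (with m'₁ = m₁ and m'_j = m_{2j−2} + m_{2j−1}). Then r' is a reduced lexicographic progress-measure supermartingale for (F, p): for each x ∈ S, r'(x) ⪰⁽²⁾_{⌈p(x)/2⌉} (X r')(x) if p(x) is even, and r'(x) ≻⁽²⁾_{⌈p(x)/2⌉} (X r')(x) if p(x) is odd. -/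
open MeasureTheory ProbabilityTheory Set
open scoped ENNReal NNReal

variable {S : Type*} [MeasurableSpace S]

/-- Block sizes of the reduced vector: `m'₁ = m₁` and
`m'_j = m_{2j−2} + m_{2j−1}` for `2 ≤ j ≤ ⌈d/2⌉` (1-based priorities). -/
def reducedSizes (d : ℕ) (m : Fin d → ℕ) : Fin ((d + 1) / 2) → ℕ := fun j =>
  if j.val = 0 then m ⟨0, by have := j.isLt; omega⟩
  else m ⟨2 * j.val - 1, by have := j.isLt; omega⟩ + m ⟨2 * j.val, by have := j.isLt; omega⟩

/-- The reduced vector: `r'₁ = r₁` and `r'_j = flat (r_{2j−2}, r_{2j−1})` for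
`2 ≤ j ≤ ⌈d/2⌉` (1-based priorities). -/
noncomputable def reducedVec {d : ℕ} (m : Fin d → ℕ) (v : ∀ i, Fin (m i) → ℝ≥0∞) :
    ∀ j : Fin ((d + 1) / 2), Fin (reducedSizes d m j) → ℝ≥0∞ := fun j =>
  if h : j.val = 0 then
    fun k => v ⟨0, by have := j.isLt; omega⟩
      (Fin.cast (by simp [reducedSizes, h]) k)
  else
    fun k =>
      Fin.append
        (v ⟨2 * j.val - 1, by have := j.isLt; omega⟩)
        (v ⟨2 * j.val, by have := j.isLt; omega⟩)
        (Fin.cast (by simp [reducedSizes, h]) k)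

theorem lexGT_castAux {n n' : ℕ} (h : n' = n) (a b : Fin n → ℝ≥0∞) (H : lexGT a b) :
    lexGT (fun k => a (Fin.cast h k)) (fun k => b (Fin.cast h k)) := by
  subst h; exact H

theorem lexGE_castAux {n n' : ℕ} (h : n' = n) (a b : Fin n → ℝ≥0∞) (H : lexGE a b) :
    lexGE (fun k => a (Fin.cast h k)) (fun k => b (Fin.cast h k)) := by
  subst h; exact H

theorem lexGT_append_left {n k : ℕ} (a b : Fin n → ℝ≥0∞) (a' b' : Fin k → ℝ≥0∞)
    (H : lexGT a b) : lexGT (Fin.append a a') (Fin.append b b') := by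
  obtain ⟨l, h1, h2⟩ := H
  refine ⟨Fin.castAdd k l, fun i hi => ?_, by simpa using h2⟩
  induction i using Fin.addCases with
  | left i => simpa using h1 i (by simp only [Fin.lt_def, Fin.val_natAdd, Fin.val_castAdd] at hi ⊢; omega)
  | right i =>
    exfalso
    have := l.isLt
    simp only [Fin.lt_def, Fin.val_natAdd, Fin.val_castAdd] at hi
    omega

theorem lexGT_append_right {n k : ℕ} (a b : Fin n → ℝ≥0∞) (a' b' : Fin k → ℝ≥0∞)
    (H : lexGE a b) (H' : lexGT a' b') : lexGT (Fin.append a a') (Fin.append b b') := by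
  rcases H with H | H
  · exact lexGT_append_left _ _ _ _ H
  obtain ⟨l, h1, h2⟩ := H'
  refine ⟨Fin.natAdd n l, fun i hi => ?_, by simpa using h2⟩
  induction i using Fin.addCases with
  | left i => simpa using H i
  | right i => simpa using h1 i (by simp only [Fin.lt_def, Fin.val_natAdd, Fin.val_castAdd] at hi ⊢; omega)

theorem lexGE_append {n k : ℕ} (a b : Fin n → ℝ≥0∞) (a' b' : Fin k → ℝ≥0∞)
    (H : lexGE a b) (H' : lexGE a' b') : lexGE (Fin.append a a') (Fin.append b b') := by
  rcases H' with H' | H'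
  · exact Or.inl (lexGT_append_right _ _ _ _ H H')
  rcases H with H | H
  · exact Or.inl (lexGT_append_left _ _ _ _ H)
  right
  intro i
  induction i using Fin.addCases with
  | left i => simpa using H i
  | right i => simpa using H' i

theorem reduced_GE {d : ℕ} (m : Fin d → ℕ) (a b : ∀ i, Fin (m i) → ℝ≥0∞)
    (j : Fin ((d + 1) / 2)) (H : ∀ i : Fin d, (i : ℕ) ≤ 2 * j.val → lexGE (a i) (b i)) :
    lexGE (reducedVec m a j) (reducedVec m b j) := by
  unfold reducedVec
  by_cases h : j.val = 0
  · simp only [h, dite_true]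
    exact lexGE_castAux _ _ _ (H _ (by simp))
  · simp only [h, dite_false]
    exact lexGE_castAux _ _ _ (lexGE_append _ _ _ _ (H _ (by simp)) (H _ (by simp)))

theorem reduced_GT {d : ℕ} (m : Fin d → ℕ) (a b : ∀ i, Fin (m i) → ℝ≥0∞)
    (j : Fin ((d + 1) / 2)) (l : Fin d) (hl : j.val = (l.val + 1) / 2)
    (H : ∀ i < l, lexGE (a i) (b i)) (H' : lexGT (a l) (b l)) :
    lexGT (reducedVec m a j) (reducedVec m b j) := by
  have hj := j.isLt
  unfold reducedVec
  by_cases h : j.val = 0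
  · simp only [h, dite_true]
    have e : l = ⟨0, by omega⟩ := Fin.ext (by simp only; omega)
    exact lexGT_castAux _ _ _ (e ▸ H')
  · simp only [h, dite_false]
    by_cases h2 : l.val = 2 * j.val
    · have e : l = ⟨2 * j.val, by omega⟩ := Fin.ext h2
      exact lexGT_castAux _ _ _ (lexGT_append_right _ _ _ _
        (H _ (by simp only [Fin.lt_def]; omega)) (e ▸ H'))
    · have e : l = ⟨2 * j.val - 1, by omega⟩ := Fin.ext (by simp only; omega)
      exact lexGT_castAux _ _ _ (lexGT_append_left _ _ _ _ (e ▸ H'))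

theorem reduced_nlexGT {d : ℕ} (m : Fin d → ℕ) (a b : ∀ i, Fin (m i) → ℝ≥0∞)
    (k : ℕ) (l : Fin d) (hk : (l.val + 1) / 2 < k) (hkd : k ≤ (d + 1) / 2)
    (H : ∀ i < l, lexGE (a i) (b i)) (H' : lexGT (a l) (b l)) :
    nlexGTTrunc k (reducedVec m a) (reducedVec m b) := by
  refine ⟨⟨(l.val + 1) / 2, by omega⟩, hk, fun i hi => ?_, reduced_GT m a b _ l rfl H H'⟩
  refine reduced_GE m a b i fun i' hi' => H i' ?_
  simp only [Fin.lt_def] at hi ⊢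
  omega

theorem nextTimeN_reducedVec (F : Kernel S S) {d : ℕ} (m : Fin d → ℕ)
    (r : S → ∀ i, Fin (m i) → ℝ≥0∞) (x : S) :
    nextTimeN F (fun y => reducedVec m (r y)) x = reducedVec m (nextTimeN F r x) := by
  funext j k
  unfold nextTimeN reducedVec
  by_cases h : j.val = 0
  · simp only [h, dite_true]
  · simp only [h, dite_false]
    generalize Fin.cast _ k = k'
    induction k' using Fin.addCases with
    | left i => simp
    | right i => simp

/-- Reducing a LexPMSM: dropping the blocks of even priorities by merging each
even-priority block into the following odd-priority block yields a reduced
LexPMSM, i.e. for every `x`, `r'(x) ⪰⁽²⁾_{⌈p(x)/2⌉} (𝕏 r')(x)` if `p(x)` is even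
and `r'(x) ≻⁽²⁾_{⌈p(x)/2⌉} (𝕏 r')(x)` if `p(x)` is odd. -/
theorem LexPMSM_to_reduced
    (F : Kernel S S) [IsMarkovKernel F]
    (d : ℕ) (p : S → ℕ) (hpm : Measurable p) (hp : ∀ x, 1 ≤ p x ∧ p x ≤ d)
    (m : Fin d → ℕ) (hm : ∀ i, 0 < m i)
    (r : S → ∀ i, Fin (m i) → ℝ≥0∞) (hr : IsLexPMSM F p r) :
    ∀ x : S,
      (Even (p x) →
        nlexGETrunc ((p x + 1) / 2) (reducedVec m (r x))
          (nextTimeN F (fun y => reducedVec m (r y)) x)) ∧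
      (¬ Even (p x) →
        nlexGTTrunc ((p x + 1) / 2) (reducedVec m (r x))
          (nextTimeN F (fun y => reducedVec m (r y)) x)) := by
  intro x
  obtain ⟨-, -, hE, hO⟩ := hr
  obtain ⟨h1, h2⟩ := hp x
  rw [nextTimeN_reducedVec]
  constructor
  · intro he
    have hall : (∀ i : Fin d, (i : ℕ) + 1 < p x →
        lexGE (r x i) (nextTimeN F r x i)) →
        nlexGETrunc ((p x + 1) / 2) (reducedVec m (r x)) (reducedVec m (nextTimeN F r x)) := by
      intro H
      right
      intro j hj
      refine reduced_GE m _ _ j fun i hi => H i ?_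
      obtain ⟨q, hq⟩ := he
      omega
    rcases hE x he with ⟨l, hl, H, H'⟩ | H
    · by_cases hlt : l.val + 1 < p x
      · left
        refine reduced_nlexGT m _ _ _ l ?_ (by omega) H H'
        obtain ⟨q, hq⟩ := he
        omega
      · exact hall fun i hi => H i (by simp only [Fin.lt_def]; omega)
    · exact hall fun i hi => H i (by omega)
  · intro ho
    obtain ⟨l, hl, H, H'⟩ := hO x ho
    refine reduced_nlexGT m _ _ _ l ?_ (by omega) H H'
    obtain ⟨q, hq⟩ := Nat.not_even_iff_odd.mp ho
    omega
end

section
/- Let F : S → G(S) be a Markov chain on a measurable space S, let p : S → {1,…,d} be a measurable priority function, and let I ⊆ {1,…,d}. Suppose there exists a measurable function r : S → [0,∞)^d such that for each x ∈ S, r(x) ⪰_{p(x)} (X r)(x) if p(x) ∈ I, and r(x) ≻_{p(x)} (X r)(x) if p(x) ∉ I. Then for every initial state x₀ ∈ S, ℙ_{x₀}[Parity(p, I)] = 1, where Parity(p, I) is the set of traces whose minimum infinitely-occurring priority lies in I. -/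
open MeasureTheory ProbabilityTheory Set
open scoped ENNReal NNReal

variable {S : Type*} [MeasurableSpace S]

/-- The generalised parity condition for a priority function `p` and a set `I` of
priorities: the minimum priority occurring infinitely often lies in `I`. -/
def parityEventIn (p : S → ℕ) (I : Set ℕ) : Set (ℕ → S) :=
  {ω | sInf {q : ℕ | {i : ℕ | p (ω i) = q}.Infinite} ∈ I}

/-- The truncated strict lexicographic supermartingale ordering on `[0,∞]^d`,
comparing only the first `k` components. -/
def lexGTTrunc {d : ℕ} (k : ℕ) (r r' : Fin d → ℝ≥0∞) : Prop :=
  ∃ l : Fin d, (l : ℕ) < k ∧ (∀ i < l, r' i ≤ r i) ∧ r' l + 1 ≤ r l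

/-- The truncated non-strict lexicographic supermartingale ordering on `[0,∞]^d`,
comparing only the first `k` components. -/
def lexGETrunc {d : ℕ} (k : ℕ) (r r' : Fin d → ℝ≥0∞) : Prop :=
  lexGTTrunc k r r' ∨ ∀ i : Fin d, (i : ℕ) < k → r' i ≤ r i

/-- The next-time operator applied componentwise: `(𝕏 r)(s) = ∫ r dF(s)`. -/
noncomputable def nextTimeV (F : Kernel S S) {n : ℕ} (r : S → Fin n → ℝ≥0∞) :
    S → Fin n → ℝ≥0∞ :=
  fun s i => ∫⁻ y, r y i ∂(F s)

lemma prep_measurable : Measurable (Function.uncurry (prep (S := S))) := by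
  refine measurable_pi_lambda _ fun n => ?_
  cases n with
  | zero => exact measurable_fst
  | succ k => exact (measurable_pi_apply k).comp measurable_snd

lemma prep_measurable' (s : S) : Measurable (prep s) :=
  prep_measurable.comp measurable_prodMk_left

lemma prep_bind_measurable (P : Kernel S (ℕ → S)) [IsMarkovKernel P] :
    Measurable fun s => (P s).map (prep s) := by
  refine Measure.measurable_of_measurable_coe _ fun E hE => ?_
  have h : ∀ s, (P s).map (prep s) E = P s (Prod.mk s ⁻¹' (Function.uncurry prep ⁻¹' E)) := by
    intro s
    rw [Measure.map_apply (prep_measurable' s) hE]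
    rfl
  simp_rw [h]
  exact Kernel.measurable_kernel_prodMk_left (prep_measurable hE)

lemma lintegral_step (F : Kernel S S) (P : Kernel S (ℕ → S)) [IsMarkovKernel P]
    (hP : ∀ s₀ : S, (P s₀ : Measure (ℕ → S)) = (F s₀).bind fun s₁ => (P s₁).map (prep s₁))
    (f : (ℕ → S) → ℝ≥0∞) (hf : Measurable f) (x : S) :
    ∫⁻ ω, f ω ∂(P x) = ∫⁻ s, ∫⁻ ω, f (prep s ω) ∂(P s) ∂(F x) := by
  rw [hP x, Measure.lintegral_bind (prep_bind_measurable P).aemeasurable hf.aemeasurable]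
  refine lintegral_congr fun s => ?_
  rw [lintegral_map hf (prep_measurable' s)]

lemma null_step (F : Kernel S S) (P : Kernel S (ℕ → S)) [IsMarkovKernel P]
    (hP : ∀ s₀ : S, (P s₀ : Measure (ℕ → S)) = (F s₀).bind fun s₁ => (P s₁).map (prep s₁))
    (E : Set (ℕ → S)) (hE : MeasurableSet E) (h : ∀ s, P s (prep s ⁻¹' E) = 0) (x : S) :
    P x E = 0 := by
  rw [hP x, Measure.bind_apply hE (prep_bind_measurable P).aemeasurable]
  simp [Measure.map_apply (prep_measurable' _) hE, h]

/-- Number of visits to `B` in the first `n` steps while staying in `A`. -/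
noncomputable def visits (A B : Set S) : ℕ → (ℕ → S) → ℝ≥0∞
  | 0, _ => 0
  | n + 1, ω => A.indicator (fun _ => 1) (ω 0) *
      (B.indicator (fun _ => 1) (ω 0) + visits A B n (fun k => ω (k + 1)))

lemma visits_measurable {A B : Set S} (hA : MeasurableSet A) (hB : MeasurableSet B) (n : ℕ) :
    Measurable (visits A B n) := by
  induction n with
  | zero => exact measurable_const
  | succ n ih =>
    have h0 : Measurable fun ω : ℕ → S => ω 0 := measurable_pi_apply 0
    have hs : Measurable fun (ω : ℕ → S) (k : ℕ) => ω (k + 1) :=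
      measurable_pi_lambda _ fun k => measurable_pi_apply (k + 1)
    exact ((measurable_const.indicator hA).comp h0).mul
      (((measurable_const.indicator hB).comp h0).add (ih.comp hs))

lemma visits_mono (A B : Set S) : Monotone (visits A B) := by
  refine monotone_nat_of_le_succ fun n => ?_
  induction n with
  | zero => intro ω; exact zero_le
  | succ n ih =>
    intro ω
    simp only [visits]
    gcongr
    exact ih _

lemma visits_eq (A B : Set S) (n : ℕ) (ω : ℕ → S) (h : ∀ k, ω k ∈ A) :
    visits A B n ω = ∑ k ∈ Finset.range n, B.indicator (fun _ => (1 : ℝ≥0∞)) (ω k) := by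
  induction n generalizing ω with
  | zero => simp [visits]
  | succ n ih =>
    rw [visits, ih _ fun k => h (k + 1), Finset.sum_range_succ', Set.indicator_of_mem (h 0),
      one_mul, add_comm]

lemma visits_top (A B : Set S) (ω : ℕ → S) (h : ∀ k, ω k ∈ A) (hB : {k | ω k ∈ B}.Infinite) :
    ⨆ n, visits A B n ω = ⊤ := by
  refine ENNReal.eq_top_of_forall_nnreal_le fun c => ?_
  obtain ⟨K, hK⟩ := exists_nat_ge c
  obtain ⟨t, ht, htc⟩ := hB.exists_subset_card_eq K
  refine le_trans ?_ (le_iSup _ (t.sup id + 1))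
  rw [visits_eq A B _ ω h]
  calc (c : ℝ≥0∞) ≤ (K : ℝ≥0∞) := by exact_mod_cast hK
    _ = ∑ k ∈ t, (1 : ℝ≥0∞) := by simp [htc]
    _ = ∑ k ∈ t, B.indicator (fun _ => (1 : ℝ≥0∞)) (ω k) :=
        Finset.sum_congr rfl fun k hk => (Set.indicator_of_mem (s := B) (a := ω k) (ht hk) (fun _ => (1 : ℝ≥0∞))).symm
    _ ≤ _ := Finset.sum_le_sum_of_subset fun k hk =>
        Finset.mem_range.2 (Nat.lt_succ_of_le (Finset.le_sup (f := id) hk))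

lemma ranking_null (F : Kernel S S) [IsMarkovKernel F] (P : Kernel S (ℕ → S)) [IsMarkovKernel P]
    (hP : ∀ s₀ : S, (P s₀ : Measure (ℕ → S)) = (F s₀).bind fun s₁ => (P s₁).map (prep s₁))
    (f : S → ℝ≥0∞) (hf : Measurable f) (hfin : ∀ x, f x ≠ ⊤) (x : S) :
    ∀ᵐ ω ∂(P x), ¬ ((∃ N, ∀ n, ∫⁻ y, f y ∂(F (ω (n + N))) ≤ f (ω (n + N))) ∧
      {n | ∫⁻ y, f y ∂(F (ω n)) + 1 ≤ f (ω n)}.Infinite) := by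
  set A : Set S := {s | ∫⁻ y, f y ∂(F s) ≤ f s} with hAdef
  set B : Set S := {s | ∫⁻ y, f y ∂(F s) + 1 ≤ f s} with hBdef
  have hXf : Measurable fun s => ∫⁻ y, f y ∂(F s) := hf.lintegral_kernel
  have hA : MeasurableSet A := measurableSet_le hXf hf
  have hB : MeasurableSet B := measurableSet_le (hXf.add_const 1) hf
  have hV := visits_measurable hA hB
  have bound : ∀ n s, ∫⁻ ω, visits A B n (prep s ω) ∂(P s) ≤ f s := by
    intro n
    induction n with
    | zero => intro s; simp [visits]
    | succ n ih =>
      intro s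
      have e : ∀ ω, visits A B (n + 1) (prep s ω) = A.indicator (fun _ => 1) s *
          (B.indicator (fun _ => 1) s + visits A B n ω) := fun ω => rfl
      simp_rw [e]
      by_cases hs : s ∈ A
      · simp only [Set.indicator_of_mem hs, one_mul]
        rw [lintegral_add_left measurable_const, lintegral_const, measure_univ, mul_one,
          lintegral_step F P hP _ (hV n)]
        have h1 := lintegral_mono (μ := F s) ih
        refine (add_le_add_right h1 _).trans ?_
        by_cases hb : s ∈ B
        · rw [Set.indicator_of_mem hb, add_comm]; exact hb
        · rw [Set.indicator_of_notMem hb, zero_add]; exact hs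
      · simp [Set.indicator_of_notMem hs]
  have hVs : Measurable fun ω => ⨆ n, visits A B n ω := Measurable.iSup hV
  set E : Set (ℕ → S) := {ω | ⨆ n, visits A B n ω = ⊤} with hEdef
  have hE : MeasurableSet E := hVs (measurableSet_singleton ⊤)
  have null0 : ∀ s, P s (prep s ⁻¹' E) = 0 := by
    intro s
    have hint : ∫⁻ ω, ⨆ n, visits A B n (prep s ω) ∂(P s) ≠ ⊤ := by
      rw [lintegral_iSup (f := fun n ω => visits A B n (prep s ω)) (fun n => (hV n).comp (prep_measurable' s))
        (fun i j hij ω => visits_mono A B hij _)]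
      exact ne_top_of_le_ne_top (hfin s) (iSup_le fun n => bound n s)
    have := ae_lt_top (hVs.comp (prep_measurable' s)) hint
    rw [ae_iff] at this
    convert this using 2
    ext ω
    simp [hEdef]
  have hsh : Measurable fun (ω : ℕ → S) (k : ℕ) => ω (k + 1) :=
      measurable_pi_lambda _ fun k => measurable_pi_apply (k + 1)
  have nullN : ∀ N s, P s {ω | (fun k => ω (k + N)) ∈ E} = 0 := by
    intro N
    have hm : MeasurableSet {ω : ℕ → S | (fun k => ω (k + N)) ∈ E} := by
      have : Measurable fun (ω : ℕ → S) (k : ℕ) => ω (k + N) :=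
        measurable_pi_lambda _ fun k => measurable_pi_apply (k + N)
      exact this hE
    induction N with
    | zero => exact fun s => null_step F P hP E hE null0 s
    | succ N ih =>
      refine fun s => null_step F P hP _ hm (fun s => ih ?_ s) s
      have : Measurable fun (ω : ℕ → S) (k : ℕ) => ω (k + N) :=
        measurable_pi_lambda _ fun k => measurable_pi_apply (k + N)
      exact this hE
  have key : ∀ᵐ ω ∂(P x), ∀ N, (fun k => ω (k + N)) ∉ E := by
    rw [ae_all_iff]
    intro N
    rw [ae_iff]
    simpa using nullN N x
  filter_upwards [key] with ω hω
  rintro ⟨⟨N, hN⟩, hinf⟩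
  refine hω N (visits_top A B _ hN ?_)
  rw [Set.infinite_iff_exists_gt]  at hinf ⊢
  intro a
  obtain ⟨b, hb, hab⟩ := hinf (a + N)
  refine ⟨b - N, ?_, by omega⟩
  have : b - N + N = b := by omega
  simp only [Set.mem_ofPred_eq, this]
  exact hb

/-- Soundness of progress-measure supermartingales for the generalised parity
condition `(p, I)`: if a measurable `r : S → [0,∞)^d` satisfies
`r(x) ⪰_{p(x)} (𝕏 r)(x)` whenever `p(x) ∈ I` and `r(x) ≻_{p(x)} (𝕏 r)(x)`
whenever `p(x) ∉ I`, then `ℙ_{x₀}[Parity(p, I)] = 1` for every initial state. -/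
theorem PMSM_implies_generalised_parity_as
    (F : Kernel S S) [IsMarkovKernel F]
    (P : Kernel S (ℕ → S)) [IsMarkovKernel P]
    (hP : ∀ s₀ : S, (P s₀ : Measure (ℕ → S)) = (F s₀).bind fun s₁ => (P s₁).map (prep s₁))
    (d : ℕ) (p : S → ℕ) (hpm : Measurable p) (hp : ∀ x, 1 ≤ p x ∧ p x ≤ d)
    (I : Set ℕ) (hI : ∀ q ∈ I, 1 ≤ q ∧ q ≤ d)
    (r : S → Fin d → ℝ≥0∞)
    (hrm : ∀ i, Measurable fun x => r x i) (hrfin : ∀ x i, r x i ≠ ⊤)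
    (hin : ∀ x, p x ∈ I → lexGETrunc (p x) (r x) (nextTimeV F r x))
    (hout : ∀ x, p x ∉ I → lexGTTrunc (p x) (r x) (nextTimeV F r x)) :
    ∀ x₀ : S, P x₀ (parityEventIn p I) = 1 := by
  intro x₀
  have hae : ∀ᵐ ω ∂(P x₀), ∀ l : Fin d,
      ¬ ((∃ N, ∀ n, nextTimeV F r (ω (n + N)) l ≤ r (ω (n + N)) l) ∧
      {n | nextTimeV F r (ω n) l + 1 ≤ r (ω n) l}.Infinite) := by
    rw [ae_all_iff]
    intro l
    exact ranking_null F P hP (fun y => r y l) (hrm l) (fun y => hrfin y l) x₀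
  have hmem : ∀ᵐ ω ∂(P x₀), ω ∈ parityEventIn p I := by
    filter_upwards [hae] with ω hω
    set Q : Set ℕ := {q : ℕ | {i : ℕ | p (ω i) = q}.Infinite} with hQ
    change sInf Q ∈ I
    have hne : Q.Nonempty := by
      by_contra hcon
      rw [Set.not_nonempty_iff_eq_empty] at hcon
      have hfin : (⋃ q ∈ Set.Iic d, {i : ℕ | p (ω i) = q}).Finite := by
        refine (Set.finite_Iic d).biUnion fun q _ => ?_
        by_contra h
        have : q ∈ Q := h
        simp [hcon] at this
      refine Set.infinite_univ (hfin.subset fun i _ => ?_)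
      simp only [Set.mem_iUnion]
      exact ⟨p (ω i), (hp _).2, rfl⟩
    by_contra hq
    have hqio : {i : ℕ | p (ω i) = sInf Q}.Infinite := Nat.sInf_mem hne
    set q := sInf Q with hqdef
    have hlow : {i : ℕ | p (ω i) < q}.Finite := by
      have hfin : (⋃ q' ∈ Set.Iio q, {i : ℕ | p (ω i) = q'}).Finite := by
        refine (Set.finite_Iio q).biUnion fun q' hq' => ?_
        by_contra h
        exact Nat.notMem_of_lt_sInf hq' h
      refine hfin.subset fun i hi => ?_
      simp only [Set.mem_iUnion]
      exact ⟨p (ω i), hi, rfl⟩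
    let D : Fin d → Set ℕ := fun l => {n | (∀ i < l, nextTimeV F r (ω n) i ≤ r (ω n) i) ∧
      nextTimeV F r (ω n) l + 1 ≤ r (ω n) l}
    have hex : ∃ l : Fin d, (l : ℕ) < q ∧ (D l).Infinite := by
      by_contra hcon
      push Not at hcon
      have hfin : (⋃ l ∈ {l : Fin d | (l : ℕ) < q}, D l).Finite :=
        (Set.toFinite _).biUnion fun l hl => hcon l hl
      refine hqio (hfin.subset fun n hn => ?_)
      have hn' : p (ω n) = q := hn
      obtain ⟨l, hl, h1, h2⟩ := hout (ω n) (by rw [hn']; exact hq)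
      simp only [Set.mem_iUnion]
      exact ⟨l, by rw [hn'] at hl; exact hl, h1, h2⟩
    obtain ⟨l, ⟨hlq, hlD⟩, hmin⟩ := WellFounded.has_min (r := fun a b : Fin d => a < b)
      wellFounded_lt {l : Fin d | (l : ℕ) < q ∧ (D l).Infinite} hex
    have hDfin : (⋃ l' ∈ Set.Iio l, D l').Finite := by
      refine (Set.toFinite _).biUnion fun l' hl' => ?_
      by_contra h
      exact hmin l' ⟨lt_trans (Fin.lt_def.1 hl') hlq, h⟩ hl'
    obtain ⟨N, hN⟩ := (hlow.union hDfin).bddAbove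
    refine hω l ⟨⟨N + 1, fun n => ?_⟩, hlD.mono fun n hn => hn.2⟩
    have hnot : ¬ (n + (N + 1) ∈ {i : ℕ | p (ω i) < q} ∪ ⋃ l' ∈ Set.Iio l, D l') := by
      intro h
      have := hN h
      omega
    set m := n + (N + 1)
    have hpm' : q ≤ p (ω m) := by
      by_contra h
      exact hnot (Or.inl (not_le.1 h))
    have hstrict : lexGTTrunc (p (ω m)) (r (ω m)) (nextTimeV F r (ω m)) →
        nextTimeV F r (ω m) l ≤ r (ω m) l := by
      rintro ⟨l', hl', h1, h2⟩
      rcases lt_trichotomy l' l with h | h | h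
      · refine absurd (Or.inr ?_) hnot
        simp only [Set.mem_iUnion]
        exact ⟨l', h, h1, h2⟩
      · subst h
        exact le_self_add.trans h2
      · exact h1 l h
    by_cases hI' : p (ω m) ∈ I
    · rcases hin _ hI' with h | h
      · exact hstrict h
      · exact h l (lt_of_lt_of_le hlq hpm')
    · exact hstrict (hout _ hI')
  have : parityEventIn p I =ᵐ[P x₀] (Set.univ : Set (ℕ → S)) := Filter.eventuallyEq_univ.2 hmem
  rw [measure_congr this, measure_univ]
end
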